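/- Drift cancellation estimate (Lemma 4.4): fix θ with −√2 < θ < √2 and R ∈ ℕ. For x ∈ ℝ, N ≥ 1, and r > 0 write x_θ^N = x/N + θ and T^N_{r,∞}(x) = { y ∈ ℝ : r/N ≤ |x_θ^N − y| }. Then lim_{r→∞} limsup_{N→∞} sup_{|x| < R} | ∫_{T^N_{r,∞}(x)} L^N(y,y)/(x_θ^N − y) dy − θ | = 0. -/

import Mathlib

open Real MeasureTheory Filter Set

/-- Physicists' Hermite polynomial `H_n(x) = (-1)^n e^{x^2} (d/dx)^n e^{-x^2}`. -/
noncomputable def hermiteP (n : ℕ) (x : ℝ) : ℝ :=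
  (-1 : ℝ) ^ n * Real.exp (x ^ 2) * iteratedDeriv n (fun t => Real.exp (-t ^ 2)) x

/-- Oscillator wave function `ψ_n(x) = (√π 2^n n!)^{-1/2} e^{-x^2/2} H_n(x)`. -/
noncomputable def osc (n : ℕ) (x : ℝ) : ℝ :=
  (Real.sqrt (Real.sqrt Real.pi * 2 ^ n * (n.factorial : ℝ)))⁻¹ *
    Real.exp (-x ^ 2 / 2) * hermiteP n x

/-- The kernel `K^N(x,y) = Σ_{k=0}^{N-1} ψ_k(x) ψ_k(y)`. -/
noncomputable def kerK (N : ℕ) (x y : ℝ) : ℝ :=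
  ∑ k ∈ Finset.range N, osc k x * osc k y

/-- The rescaled kernel `L^N(x,y) = N^{-1/2} K^N(√N x, √N y)`. -/
noncomputable def kerL (N : ℕ) (x y : ℝ) : ℝ :=
  (Real.sqrt (N : ℝ))⁻¹ * kerK N (Real.sqrt (N : ℝ) * x) (Real.sqrt (N : ℝ) * y)

/-!
The density `L(y) = L^N(y,y)` solves the third-order equation
`N⁻² ∂³L + 4 (2 - y²) ∂L + 4 y L = 0`. Integrating it against powers of the resolvent `(z - y)⁻¹`
shows that the Stieltjes transform `G` satisfies `(2 - z²) ∂G + z G - 2 = O(N⁻² |Im z|⁻⁴)`. Up to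
the error this is the first-order equation of the semicircle transform `z - i √(2 - z²)`, whose
real part is `x + O(η)` at `z = x + i η` for `x` in the bulk; integrating down from height `1 / η`
with `η = N^(-1/3)` gives `Re G(x + i η) = x + O(η)`.

The integral outside a window of radius `ρ` around `x` is compared to `Re G(x + i η)`: the
difference of the two kernels is odd, so it only sees the increments of `L` near `x`. These are
controlled uniformly in `N` because the ladder relations give `(√2 - |y|) |∂L(y)| ≤ L(y)`.
-/

section HermiteFunctions

open Polynomial

/-- The Hermite polynomial `H_n` as an element of `ℝ[X]`. -/
noncomputable def hermitePoly : ℕ → ℝ[X]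
  | 0 => 1
  | n + 1 => C 2 * X * hermitePoly n - derivative (hermitePoly n)

lemma iteratedDeriv_exp_neg_sq (n : ℕ) : iteratedDeriv n (fun t : ℝ => Real.exp (-t ^ 2)) =
    fun x => (-1) ^ n * ((hermitePoly n).eval x * Real.exp (-x ^ 2)) := by
  induction n with
  | zero => simp [hermitePoly]
  | succ n ih =>
    ext x
    have hexp : HasDerivAt (fun t : ℝ => Real.exp (-t ^ 2)) (Real.exp (-x ^ 2) * (-(2 * x))) x := by
      simpa using (hasDerivAt_pow 2 x).neg.exp
    rw [iteratedDeriv_succ, ih,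
      ((((hermitePoly n).hasDerivAt x).fun_mul hexp).const_mul ((-1) ^ n)).deriv]
    simp only [hermitePoly, eval_sub, eval_mul, eval_C, eval_X]
    ring

lemma hermiteP_eq_eval (n : ℕ) (x : ℝ) : hermiteP n x = (hermitePoly n).eval x := by
  have hexp : Real.exp (x ^ 2) * Real.exp (-x ^ 2) = 1 := by rw [← Real.exp_add]; simp
  have hsign : (-1 : ℝ) ^ n * (-1) ^ n = 1 := by rw [← mul_pow]; simp
  rw [hermiteP, iteratedDeriv_exp_neg_sq]
  linear_combination
    (hermitePoly n).eval x * (hexp + (Real.exp (x ^ 2) * Real.exp (-x ^ 2)) * hsign)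

lemma derivative_hermitePoly_succ (n : ℕ) :
    derivative (hermitePoly (n + 1)) = C (2 * ((n : ℝ) + 1)) * hermitePoly n := by
  induction n with
  | zero => simp [hermitePoly]
  | succ n ih =>
    have hrec : derivative (hermitePoly n) = C 2 * X * hermitePoly n - hermitePoly (n + 1) := by
      rw [hermitePoly]; ring
    rw [hermitePoly, ih]
    simp only [derivative_sub, derivative_mul, derivative_C, derivative_X, derivative_one, ih, hrec,
      map_mul, map_add, Nat.cast_add, Nat.cast_one, map_one]
    ring

/-- The `L²` normalising constant of the oscillator wave function `ψ_n`. -/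
noncomputable def oscNorm (n : ℕ) : ℝ := (√(√π * 2 ^ n * (n.factorial : ℝ)))⁻¹

/-- The coefficient `√(2(n+1))` of the ladder operators between `ψ_n` and `ψ_{n+1}`. -/
noncomputable def ladderCoeff (n : ℕ) : ℝ := √(2 * ((n : ℝ) + 1))

lemma ladderCoeff_pos (n : ℕ) : 0 < ladderCoeff n := Real.sqrt_pos.2 (by positivity)

lemma ladderCoeff_sq (n : ℕ) : ladderCoeff n ^ 2 = 2 * ((n : ℝ) + 1) :=
  Real.sq_sqrt (by positivity)

lemma osc_eq (n : ℕ) (x : ℝ) :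
    osc n x = oscNorm n * (Real.exp (-x ^ 2 / 2) * (hermitePoly n).eval x) := by
  rw [osc, hermiteP_eq_eval, oscNorm, mul_assoc]

lemma oscNorm_eq_ladderCoeff_mul (n : ℕ) : oscNorm n = ladderCoeff n * oscNorm (n + 1) := by
  have hfac : √π * 2 ^ (n + 1) * ((n + 1).factorial : ℝ) =
      2 * ((n : ℝ) + 1) * (√π * 2 ^ n * (n.factorial : ℝ)) := by
    rw [Nat.factorial_succ]; push_cast; ring
  rw [oscNorm, oscNorm, hfac, Real.sqrt_mul (x := 2 * ((n : ℝ) + 1)) (by positivity),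
    mul_inv (√(2 * ((n : ℝ) + 1))), ← ladderCoeff, mul_inv_cancel_left₀ (ladderCoeff_pos n).ne']

lemma hasDerivAt_osc (n : ℕ) (x : ℝ) : HasDerivAt (osc n)
    (oscNorm n * (Real.exp (-x ^ 2 / 2) * (derivative (hermitePoly n)).eval x) - x * osc n x)
    x := by
  have hexp : HasDerivAt (fun t : ℝ => Real.exp (-t ^ 2 / 2)) (Real.exp (-x ^ 2 / 2) * (-x)) x := by
    refine ((hasDerivAt_pow 2 x).fun_neg.div_const 2).exp.congr_deriv ?_
    ring
  rw [funext (osc_eq n)]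
  refine ((hexp.fun_mul ((hermitePoly n).hasDerivAt x)).const_mul (oscNorm n)).congr_deriv ?_
  ring

lemma hasDerivAt_osc_lower (n : ℕ) (x : ℝ) :
    HasDerivAt (osc (n + 1)) (ladderCoeff n * osc n x - x * osc (n + 1) x) x := by
  refine (hasDerivAt_osc (n + 1) x).congr_deriv ?_
  rw [osc_eq n, derivative_hermitePoly_succ, oscNorm_eq_ladderCoeff_mul n, eval_mul, eval_C,
    ← ladderCoeff_sq]
  ring

lemma hasDerivAt_osc_raise (n : ℕ) (x : ℝ) :
    HasDerivAt (osc n) (x * osc n x - ladderCoeff n * osc (n + 1) x) x := by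
  refine (hasDerivAt_osc n x).congr_deriv ?_
  rw [osc_eq (n + 1), osc_eq n, oscNorm_eq_ladderCoeff_mul]
  simp only [hermitePoly, eval_sub, eval_mul, eval_C, eval_X]
  ring

lemma ladderCoeff_mul_osc_one (x : ℝ) : ladderCoeff 0 * osc 1 x = 2 * x * osc 0 x := by
  have h := (hasDerivAt_osc 0 x).unique (hasDerivAt_osc_raise 0 x)
  simp only [hermitePoly, derivative_one, eval_zero, mul_zero, zero_sub, zero_add] at h
  linarith

lemma ladderCoeff_mul_osc_add_two (n : ℕ) (x : ℝ) :
    ladderCoeff (n + 1) * osc (n + 2) x = 2 * x * osc (n + 1) x - ladderCoeff n * osc n x := by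
  have h := (hasDerivAt_osc_lower n x).unique (hasDerivAt_osc_raise (n + 1) x)
  linarith

lemma integrable_eval_mul_exp_neg_sq (p : ℝ[X]) :
    Integrable fun x : ℝ => p.eval x * Real.exp (-x ^ 2) := by
  induction p using Polynomial.induction_on' with
  | add p q hp hq => simpa only [eval_add, add_mul] using hp.fun_add hq
  | monomial n a =>
    have hn : (-1 : ℝ) < n := neg_one_lt_zero.trans_le n.cast_nonneg
    simpa [mul_assoc] using
      (integrable_rpow_mul_exp_neg_mul_sq (b := 1) one_pos hn).const_mul a

lemma integrable_pow_mul_osc_mul_osc (j n m : ℕ) :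
    Integrable fun x : ℝ => x ^ j * (osc n x * osc m x) := by
  refine ((integrable_eval_mul_exp_neg_sq (X ^ j * (hermitePoly n * hermitePoly m))).const_mul
    (oscNorm n * oscNorm m)).congr (.of_forall fun x => ?_)
  have hexp : Real.exp (-x ^ 2) = Real.exp (-x ^ 2 / 2) * Real.exp (-x ^ 2 / 2) := by
    rw [← Real.exp_add, add_halves]
  simp only [osc_eq, eval_mul, eval_pow, eval_X, hexp]
  ring

lemma integrable_osc_mul_osc (n m : ℕ) : Integrable fun x : ℝ => osc n x * osc m x := by
  simpa using integrable_pow_mul_osc_mul_osc 0 n m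

lemma integral_osc_mul_self (n : ℕ) : ∫ x : ℝ, osc n x * osc n x = 1 := by
  induction n with
  | zero =>
    have hgauss (x : ℝ) : osc 0 x * osc 0 x = oscNorm 0 ^ 2 * Real.exp (-1 * x ^ 2) := by
      have hexp : Real.exp (-1 * x ^ 2) = Real.exp (-x ^ 2 / 2) * Real.exp (-x ^ 2 / 2) := by
        rw [← Real.exp_add]; ring_nf
      rw [osc_eq, hexp, hermitePoly, eval_one]; ring
    simp_rw [hgauss, integral_const_mul, integral_gaussian, oscNorm]
    have hπ : √π ≠ 0 := (Real.sqrt_pos.2 Real.pi_pos).ne'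
    simp [hπ]
  | succ n ih =>
    have hderiv (x : ℝ) : HasDerivAt (fun x => osc n x * osc (n + 1) x)
        (ladderCoeff n * (osc n x * osc n x) - ladderCoeff n * (osc (n + 1) x * osc (n + 1) x))
        x :=
      ((hasDerivAt_osc_raise n x).fun_mul (hasDerivAt_osc_lower n x)).congr_deriv (by ring)
    have hi₀ := (integrable_osc_mul_osc n n).const_mul (ladderCoeff n)
    have hi₁ := (integrable_osc_mul_osc (n + 1) (n + 1)).const_mul (ladderCoeff n)
    have hzero := integral_eq_zero_of_hasDerivAt_of_integrable hderiv (hi₀.sub hi₁)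
      (integrable_osc_mul_osc n (n + 1))
    rw [integral_sub hi₀ hi₁, integral_const_mul, integral_const_mul, ih, ← mul_sub] at hzero
    linarith [(mul_eq_zero.1 hzero).resolve_left (ladderCoeff_pos n).ne']

end HermiteFunctions

section Kernel

lemma kerK_self_eq (n : ℕ) (x : ℝ) : kerK (n + 1) x x =
    (n + 1) * (osc (n + 1) x ^ 2 + osc n x ^ 2) - ladderCoeff n * x * osc (n + 1) x * osc n x := by
  induction n with
  | zero =>
    have hcoeff := ladderCoeff_sq 0
    simp only [kerK, Finset.sum_range_one, zero_add, Nat.cast_zero, mul_one] at hcoeff ⊢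
    linear_combination (osc 1 x ^ 2 / 2) * hcoeff
      - (ladderCoeff 0 * osc 1 x / 2) * ladderCoeff_mul_osc_one x
  | succ n ih =>
    rw [kerK, Finset.sum_range_succ, ← kerK, ih]
    have hcoeff := ladderCoeff_sq (n + 1)
    push_cast at hcoeff ⊢
    linear_combination (osc (n + 2) x ^ 2 / 2) * hcoeff - (osc n x ^ 2 / 2) * ladderCoeff_sq n
      - ((ladderCoeff (n + 1) * osc (n + 2) x - ladderCoeff n * osc n x) / 2) *
        ladderCoeff_mul_osc_add_two n x

/-- The derivative of `x ↦ K^{n+1}(x,x)`. -/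
noncomputable def kerKDiagDeriv (n : ℕ) (x : ℝ) : ℝ := -ladderCoeff n * (osc (n + 1) x * osc n x)

/-- The second derivative of `x ↦ K^{n+1}(x,x)`. -/
noncomputable def kerKDiagDeriv₂ (n : ℕ) (x : ℝ) : ℝ :=
  ladderCoeff n ^ 2 * (osc (n + 1) x * osc (n + 1) x - osc n x * osc n x)

lemma hasDerivAt_kerK_self (n : ℕ) (x : ℝ) :
    HasDerivAt (fun x => kerK (n + 1) x x) (kerKDiagDeriv n x) x := by
  have hup := hasDerivAt_osc_lower n x
  have hdown := hasDerivAt_osc_raise n x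
  simp_rw [kerK_self_eq]
  refine (((hup.fun_pow 2).fun_add (hdown.fun_pow 2)).const_mul ((n : ℝ) + 1) |>.fun_sub
    ((((hasDerivAt_id' x).const_mul (ladderCoeff n)).fun_mul hup).fun_mul hdown)).congr_deriv ?_
  simp only [kerKDiagDeriv]
  push_cast
  linear_combination x * (osc (n + 1) x ^ 2 - osc n x ^ 2) * ladderCoeff_sq n

lemma hasDerivAt_kerKDiagDeriv (n : ℕ) (x : ℝ) :
    HasDerivAt (kerKDiagDeriv n) (kerKDiagDeriv₂ n x) x := by
  refine (((hasDerivAt_osc_lower n x).fun_mul (hasDerivAt_osc_raise n x)).const_mul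
    (-ladderCoeff n)).congr_deriv ?_
  rw [kerKDiagDeriv₂]
  ring

lemma hasDerivAt_kerKDiagDeriv₂ (n : ℕ) (x : ℝ) : HasDerivAt (kerKDiagDeriv₂ n)
    (-(4 * (2 * (n + 1) - x ^ 2) * kerKDiagDeriv n x + 4 * x * kerK (n + 1) x x)) x := by
  have hup := hasDerivAt_osc_lower n x
  have hdown := hasDerivAt_osc_raise n x
  refine (((hup.fun_mul hup).fun_sub (hdown.fun_mul hdown)).const_mul
    (ladderCoeff n ^ 2)).congr_deriv ?_
  rw [kerK_self_eq, kerKDiagDeriv]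
  linear_combination (4 * ladderCoeff n * osc (n + 1) x * osc n x
    - 2 * x * (osc (n + 1) x ^ 2 + osc n x ^ 2)) * ladderCoeff_sq n

lemma sub_abs_mul_abs_kerKDiagDeriv_le (n : ℕ) (x : ℝ) :
    (ladderCoeff n - |x|) * |kerKDiagDeriv n x| ≤ kerK (n + 1) x x := by
  set A := osc (n + 1) x
  set B := osc n x
  have hc := ladderCoeff_pos n
  have hamgm : 2 * |A * B| ≤ A ^ 2 + B ^ 2 := by
    rw [abs_mul, ← sq_abs A, ← sq_abs B, ← mul_assoc]; exact two_mul_le_add_sq _ _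
  have hcross : x * (A * B) ≤ |x| * |A * B| := (le_abs_self _).trans (abs_mul _ _).le
  calc (ladderCoeff n - |x|) * |kerKDiagDeriv n x|
      = ladderCoeff n ^ 2 / 2 * (2 * |A * B|) - ladderCoeff n * (|x| * |A * B|) := by
        rw [kerKDiagDeriv, abs_mul, abs_neg, abs_of_pos hc]; ring
    _ ≤ ladderCoeff n ^ 2 / 2 * (A ^ 2 + B ^ 2) - ladderCoeff n * (x * (A * B)) := by gcongr
    _ = kerK (n + 1) x x := by rw [kerK_self_eq, ladderCoeff_sq]; ring

end Kernel

section Density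

/-- A probability density `L` on the line, with derivatives `L₁`, `L₂`, solving
`ε² ∂³L + 4 (2 - y²) ∂L + 4 y L = 0`. For `ε = 1 / N` this is the equation of the rescaled density
`y ↦ L^N(y,y)`; as `ε → 0` it degenerates to a first-order equation solved by the semicircle
density `π⁻¹ √(2 - y²)`. -/
structure IsOscillatorDensity (ε : ℝ) (L L₁ L₂ : ℝ → ℝ) : Prop where
  nonneg (y : ℝ) : 0 ≤ L y
  integral_eq_one : ∫ y, L y = 1
  hasDerivAt (y : ℝ) : HasDerivAt L (L₁ y) y
  hasDerivAt₁ (y : ℝ) : HasDerivAt L₁ (L₂ y) y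
  hasDerivAt₂ (y : ℝ) :
    HasDerivAt (fun y => ε ^ 2 * L₂ y) (-(4 * (2 - y ^ 2) * L₁ y + 4 * y * L y)) y
  integrable_pow_mul (j : ℕ) : Integrable fun y => y ^ j * L y
  integrable₁ : Integrable L₁
  integrable₂ : Integrable L₂

lemma integrable_pow_mul_comp_mul_left {f : ℝ → ℝ} {j : ℕ} (hf : Integrable fun x => x ^ j * f x)
    {s : ℝ} (hs : s ≠ 0) : Integrable fun y => y ^ j * f (s * y) := by
  refine ((hf.comp_mul_left' hs).const_mul ((s ^ j)⁻¹)).congr (.of_forall fun y => ?_)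
  simp only
  rw [mul_pow, mul_assoc, inv_mul_cancel_left₀ (pow_ne_zero j hs)]

lemma integrable_pow_mul_kerK_self (N j : ℕ) : Integrable fun x => x ^ j * kerK N x x := by
  simp_rw [kerK, Finset.mul_sum]
  exact integrable_finsetSum _ fun k _ => integrable_pow_mul_osc_mul_osc j k k

lemma integral_kerK_self (N : ℕ) : ∫ x, kerK N x x = N := by
  simp_rw [kerK]
  rw [integral_finsetSum _ fun k _ => integrable_osc_mul_osc k k]
  simp [integral_osc_mul_self]

lemma kerL_nonneg (N : ℕ) (y : ℝ) : 0 ≤ kerL N y y :=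
  mul_nonneg (by positivity) (Finset.sum_nonneg fun _ _ => mul_self_nonneg _)

lemma integral_kerL_self {N : ℕ} (hN : N ≠ 0) : ∫ y, kerL N y y = 1 := by
  have hN₀ : (0 : ℝ) < N := by exact_mod_cast hN.bot_lt
  simp_rw [kerL]
  rw [integral_const_mul, Measure.integral_comp_mul_left (fun x => kerK N x x), integral_kerK_self,
    abs_of_pos (by positivity), smul_eq_mul, ← mul_assoc, ← mul_inv, Real.mul_self_sqrt hN₀.le,
    inv_mul_cancel₀ hN₀.ne']

/-- The derivative of `y ↦ L^{n+1}(y,y)`. -/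
noncomputable def kerLDiagDeriv (n : ℕ) (y : ℝ) : ℝ := kerKDiagDeriv n (√(n + 1 : ℕ) * y)

/-- The second derivative of `y ↦ L^{n+1}(y,y)`. -/
noncomputable def kerLDiagDeriv₂ (n : ℕ) (y : ℝ) : ℝ :=
  √(n + 1 : ℕ) * kerKDiagDeriv₂ n (√(n + 1 : ℕ) * y)

lemma isOscillatorDensity_kerL (n : ℕ) :
    IsOscillatorDensity (1 / (n + 1 : ℕ)) (fun y => kerL (n + 1) y y) (kerLDiagDeriv n)
      (kerLDiagDeriv₂ n) := by
  set s := √(n + 1 : ℕ) with hs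
  have hs₀ : s ≠ 0 := (Real.sqrt_pos.2 (by positivity)).ne'
  have hsq : s ^ 2 = (n + 1 : ℕ) := Real.sq_sqrt (by positivity)
  have hscale (y : ℝ) : HasDerivAt (fun y => s * y) s y := by
    simpa using (hasDerivAt_id' y).const_mul s
  refine ⟨kerL_nonneg _, integral_kerL_self n.succ_ne_zero, fun y => ?_, fun y => ?_, fun y => ?_,
    fun j => ?_, ?_, ?_⟩
  · refine (((hasDerivAt_kerK_self n (s * y)).comp y (hscale y)).const_mul s⁻¹).congr_deriv ?_
    rw [mul_comm, mul_inv_cancel_right₀ hs₀, kerLDiagDeriv]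
  · exact ((hasDerivAt_kerKDiagDeriv n (s * y)).comp y (hscale y)).congr_deriv (mul_comm _ _)
  · refine ((((hasDerivAt_kerKDiagDeriv₂ n (s * y)).comp y (hscale y)).const_mul s).const_mul
      ((1 / ((n + 1 : ℕ) : ℝ)) ^ 2)).congr_deriv ?_
    rw [kerL, kerLDiagDeriv, ← hs, ← Nat.cast_add_one, ← hsq]
    field_simp
  · exact ((integrable_pow_mul_comp_mul_left (integrable_pow_mul_kerK_self (n + 1) j) hs₀).const_mul
      s⁻¹).congr (.of_forall fun y => mul_left_comm _ _ _)
  · exact ((integrable_osc_mul_osc (n + 1) n).const_mul (-ladderCoeff n)).comp_mul_left' hs₀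
  · exact ((((integrable_osc_mul_osc (n + 1) (n + 1)).sub (integrable_osc_mul_osc n n)).const_mul
      (ladderCoeff n ^ 2)).comp_mul_left' hs₀).const_mul s

lemma sub_abs_mul_abs_kerLDiagDeriv_le (n : ℕ) (y : ℝ) :
    (√2 - |y|) * |kerLDiagDeriv n y| ≤ kerL (n + 1) y y := by
  set s := √(n + 1 : ℕ) with hs
  have hs₀ : 0 < s := Real.sqrt_pos.2 (by positivity)
  have hcoeff : ladderCoeff n - |s * y| = s * (√2 - |y|) := by
    rw [ladderCoeff, Real.sqrt_mul zero_le_two, abs_mul, abs_of_pos hs₀, hs, Nat.cast_add_one]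
    ring
  rw [kerL, kerLDiagDeriv, ← hs, ← mul_le_mul_iff_right₀ hs₀, mul_inv_cancel_left₀ hs₀.ne',
    ← mul_assoc, ← hcoeff]
  exact sub_abs_mul_abs_kerKDiagDeriv_le n (s * y)

end Density

section BulkBound

lemma sub_mul_le_two_mul_integral {a t : ℝ} {f f' : ℝ → ℝ} (hint : Integrable f)
    (hnonneg : ∀ y, 0 ≤ f y) (hderiv : ∀ y, HasDerivAt f (f' y) y) (hta : t ≤ a)
    (hlog : ∀ y ∈ Ioo t a, (a - y) * -f' y ≤ f y) : (a - t) * f t ≤ 2 * ∫ y, f y := by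
  have hprod (y : ℝ) : HasDerivAt (fun y => (y - a) * f y) (f y + (y - a) * f' y) y := by
    simpa using ((hasDerivAt_id' y).sub_const a).fun_mul (hderiv y)
  calc (a - t) * f t = (a - a) * f a - (t - a) * f t := by ring
    _ ≤ ∫ y in t..a, 2 * f y :=
        intervalIntegral.sub_le_integral_of_hasDeriv_right_of_le hta
          (fun y _ => (hprod y).continuousAt.continuousWithinAt)
          (fun y _ => (hprod y).hasDerivWithinAt) (hint.const_mul 2).integrableOn
          (fun y hy => by linarith [hlog y hy])
    _ = 2 * ∫ y in Ioc t a, f y := by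
        rw [intervalIntegral.integral_const_mul, intervalIntegral.integral_of_le hta]
    _ ≤ 2 * ∫ y, f y :=
        mul_le_mul_of_nonneg_left (setIntegral_le_integral hint (.of_forall hnonneg)) zero_le_two

lemma sub_abs_mul_le_two_mul_integral {a : ℝ} {f f' : ℝ → ℝ} (hint : Integrable f)
    (hnonneg : ∀ y, 0 ≤ f y) (hderiv : ∀ y, HasDerivAt f (f' y) y)
    (hlog : ∀ y, (a - |y|) * |f' y| ≤ f y) (t : ℝ) : (a - |t|) * f t ≤ 2 * ∫ y, f y := by
  rcases lt_or_ge a |t| with hat | hta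
  · exact (mul_nonpos_of_nonpos_of_nonneg (sub_nonpos.2 hat.le) (hnonneg t)).trans
      (mul_nonneg zero_le_two (integral_nonneg hnonneg))
  rcases le_total 0 t with ht | ht
  · rw [abs_of_nonneg ht] at hta ⊢
    refine sub_mul_le_two_mul_integral hint hnonneg hderiv hta fun y hy => ?_
    have := hlog y
    rw [abs_of_pos (ht.trans_lt hy.1)] at this
    exact (mul_le_mul_of_nonneg_left (neg_le_abs _) (sub_nonneg.2 hy.2.le)).trans this
  · have hreflect (y : ℝ) : HasDerivAt (fun y => f (-y)) (-f' (-y)) y := by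
      exact ((hderiv (-y)).comp y (hasDerivAt_neg y)).congr_deriv (mul_neg_one _)
    rw [abs_of_nonpos ht] at hta ⊢
    have h := sub_mul_le_two_mul_integral hint.comp_neg (fun y => hnonneg (-y)) hreflect hta
      fun y hy => by
        have := hlog (-y)
        rw [abs_neg, abs_of_pos ((neg_nonneg.2 ht).trans_lt hy.1)] at this
        exact (mul_le_mul_of_nonneg_left ((neg_neg _).trans_le (le_abs_self _))
          (sub_nonneg.2 hy.2.le)).trans this
    rwa [integral_neg_eq_self f, neg_neg] at h

lemma abs_sub_le_of_sub_abs_mul_abs_deriv_le {a δ : ℝ} {f f' : ℝ → ℝ} (hδ : 0 < δ)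
    (hint : Integrable f) (hnonneg : ∀ y, 0 ≤ f y) (hderiv : ∀ y, HasDerivAt f (f' y) y)
    (hlog : ∀ y, (a - |y|) * |f' y| ≤ f y) {u v : ℝ} (hu : |u| ≤ a - δ) (hv : |v| ≤ a - δ) :
    |f u - f v| ≤ 2 * (∫ y, f y) / δ ^ 2 * |u - v| := by
  refine (convex_Icc (-(a - δ)) (a - δ)).norm_image_sub_le_of_norm_hasDerivWithin_le
    (fun y _ => (hderiv y).hasDerivWithinAt) (fun y hy => ?_) (abs_le.1 hv) (abs_le.1 hu)
  have hy : δ ≤ a - |y| := by linarith [abs_le.2 hy]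
  rw [Real.norm_eq_abs, le_div_iff₀ (by positivity)]
  calc |f' y| * δ ^ 2 ≤ |f' y| * (a - |y|) ^ 2 := by gcongr
    _ = (a - |y|) * ((a - |y|) * |f' y|) := by ring
    _ ≤ (a - |y|) * f y := mul_le_mul_of_nonneg_left (hlog y) (hδ.le.trans hy)
    _ ≤ 2 * ∫ y, f y := sub_abs_mul_le_two_mul_integral hint hnonneg hderiv hlog y

end BulkBound

section StieltjesTransform

/-- The Stieltjes transform `∫ f(y) (z - y)⁻¹ dy` of the density `f` (for `k = 1`), together with
its analogues with a `k`-th power of the kernel. -/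
noncomputable def stieltjes (f : ℝ → ℝ) (k : ℕ) (z : ℂ) : ℂ :=
  ∫ y : ℝ, (f y : ℂ) * ((z - y)⁻¹) ^ k

variable {f g : ℝ → ℝ} {z : ℂ}

lemma sub_ofReal_ne_zero (hz : z.im ≠ 0) (y : ℝ) : z - y ≠ 0 := fun h =>
  hz (by simpa using congrArg Complex.im h)

lemma norm_inv_sub_ofReal_pow_le (k : ℕ) (hz : z.im ≠ 0) (y : ℝ) :
    ‖((z - y)⁻¹) ^ k‖ ≤ (|z.im| ^ k)⁻¹ := by
  have him : |z.im| ≤ ‖z - y‖ := by simpa using Complex.abs_im_le_norm (z - y)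
  rw [norm_pow, norm_inv, inv_pow]
  exact inv_anti₀ (by positivity) (by gcongr)

lemma hasDerivAt_inv_pow (k : ℕ) {u : ℂ} (hu : u ≠ 0) :
    HasDerivAt (fun u => (u⁻¹) ^ k) (-k * (u⁻¹) ^ (k + 1)) u := by
  refine ((hasDerivAt_inv hu).fun_pow k).congr_deriv ?_
  rcases k with - | k
  · simp
  · rw [← inv_pow, Nat.add_sub_cancel]; ring

lemma hasDerivAt_inv_sub_ofReal_pow (k : ℕ) (hz : z.im ≠ 0) (y : ℝ) :
    HasDerivAt (fun y : ℝ => ((z - y)⁻¹) ^ k) (k * ((z - y)⁻¹) ^ (k + 1)) y := by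
  have hsub : HasDerivAt (fun y : ℝ => z - y) (-1) y := by
    simpa using (hasDerivAt_id' y).ofReal_comp.const_sub z
  refine (HasDerivAt.comp (h₂ := fun u : ℂ => (u⁻¹) ^ k) y
    (hasDerivAt_inv_pow k (sub_ofReal_ne_zero hz y)) hsub).congr_deriv ?_
  ring

lemma integrable_stieltjes (hf : Integrable f) (k : ℕ) (hz : z.im ≠ 0) :
    Integrable fun y : ℝ => (f y : ℂ) * ((z - y)⁻¹) ^ k :=
  hf.ofReal.mul_bdd (continuous_iff_continuousAt.2 fun y =>
      (hasDerivAt_inv_sub_ofReal_pow k hz y).continuousAt).aestronglyMeasurable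
    (.of_forall (norm_inv_sub_ofReal_pow_le k hz))

lemma norm_stieltjes_le (hf : Integrable f) (k : ℕ) (hz : z.im ≠ 0) :
    ‖stieltjes f k z‖ ≤ (∫ y, |f y|) / |z.im| ^ k := by
  rw [stieltjes, div_eq_mul_inv, ← integral_mul_const]
  refine norm_integral_le_of_norm_le (hf.abs.mul_const _) (.of_forall fun y => ?_)
  rw [norm_mul, Complex.norm_real, Real.norm_eq_abs]
  gcongr
  exact norm_inv_sub_ofReal_pow_le k hz y

lemma stieltjes_zero : stieltjes f 0 z = ∫ y, f y := by
  simp_rw [stieltjes, pow_zero, mul_one, integral_complex_ofReal]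

lemma stieltjes_add (hf : Integrable f) (hg : Integrable g) (k : ℕ) (hz : z.im ≠ 0) :
    stieltjes (fun y => f y + g y) k z = stieltjes f k z + stieltjes g k z := by
  simp_rw [stieltjes, Complex.ofReal_add, add_mul]
  exact integral_add (integrable_stieltjes hf k hz) (integrable_stieltjes hg k hz)

lemma stieltjes_const_mul (c : ℝ) (k : ℕ) :
    stieltjes (fun y => c * f y) k z = c * stieltjes f k z := by
  simp_rw [stieltjes, Complex.ofReal_mul, mul_assoc]
  exact integral_const_mul _ _

lemma stieltjes_id_mul (hf : Integrable f) (k : ℕ) (hz : z.im ≠ 0) :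
    stieltjes (fun y => y * f y) (k + 1) z = z * stieltjes f (k + 1) z - stieltjes f k z := by
  simp_rw [stieltjes]
  rw [← integral_const_mul, ← integral_sub ((integrable_stieltjes hf (k + 1) hz).const_mul z)
    (integrable_stieltjes hf k hz)]
  congr 1 with y
  have hinv : (z - y) * (z - y)⁻¹ = 1 := mul_inv_cancel₀ (sub_ofReal_ne_zero hz y)
  push_cast
  linear_combination (-(f y : ℂ) * ((z - y)⁻¹) ^ k) * hinv

lemma stieltjes_deriv {f' : ℝ → ℝ} (hf : Integrable f) (hf' : Integrable f')
    (hderiv : ∀ y, HasDerivAt f (f' y) y) (k : ℕ) (hz : z.im ≠ 0) :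
    stieltjes f' k z = -k * stieltjes f (k + 1) z := by
  have hparts := integral_mul_deriv_eq_deriv_mul_of_integrable
    (fun y _ => hasDerivAt_inv_sub_ofReal_pow k hz y) (fun y _ => (hderiv y).ofReal_comp)
    ((integrable_stieltjes hf' k hz).congr (.of_forall fun y => mul_comm _ _))
    (((integrable_stieltjes hf (k + 1) hz).const_mul (k : ℂ)).congr
      (.of_forall fun y => by simp only [Pi.mul_apply]; ring))
    ((integrable_stieltjes hf k hz).congr (.of_forall fun y => mul_comm _ _))
  calc stieltjes f' k z = ∫ y : ℝ, ((z - y)⁻¹) ^ k * (f' y : ℂ) := by simp_rw [stieltjes, mul_comm]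
    _ = -∫ y : ℝ, (k : ℂ) * ((f y : ℂ) * ((z - y)⁻¹) ^ (k + 1)) := by
        rw [hparts]; congr 2 with y; ring
    _ = -k * stieltjes f (k + 1) z := by rw [integral_const_mul, stieltjes, neg_mul]

lemma hasDerivAt_stieltjes (hf : Integrable f) (k : ℕ) (hz : z.im ≠ 0) :
    HasDerivAt (stieltjes f k) (-k * stieltjes f (k + 1) z) z := by
  have hz₀ : 0 < |z.im| := abs_pos.2 hz
  let U : Set ℂ := {w | |z.im| / 2 < |w.im|}
  have hU : U ∈ nhds z := (isOpen_lt continuous_const Complex.continuous_im.abs).mem_nhds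
    (half_lt_self hz₀)
  have him {w : ℂ} (hw : w ∈ U) : w.im ≠ 0 := abs_pos.1 ((half_pos hz₀).trans hw)
  have hkernel (w : ℂ) (hw : w.im ≠ 0) (y : ℝ) :
      HasDerivAt (fun w : ℂ => (f y : ℂ) * ((w - y)⁻¹) ^ k)
        (-k * ((f y : ℂ) * ((w - y)⁻¹) ^ (k + 1))) w := by
    refine ((HasDerivAt.comp (h₂ := fun u : ℂ => (u⁻¹) ^ k) w
      (hasDerivAt_inv_pow k (sub_ofReal_ne_zero hw y))
      ((hasDerivAt_id' w).sub_const (y : ℂ))).const_mul (f y : ℂ)).congr_deriv ?_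
    ring
  have hderiv := (hasDerivAt_integral_of_dominated_loc_of_deriv_le (μ := volume)
    (bound := fun y => k * (|f y| * ((|z.im| / 2) ^ (k + 1))⁻¹)) hU
    (Filter.eventually_of_mem hU fun w hw => (integrable_stieltjes hf k (him hw)).1)
    (integrable_stieltjes hf k hz) ((integrable_stieltjes hf (k + 1) hz).const_mul (-k : ℂ)).1
    (.of_forall fun y w hw => ?_) ((hf.abs.mul_const _).const_mul _)
    (.of_forall fun y w hw => hkernel w (him hw) y)).2
  · rwa [integral_const_mul] at hderiv
  · rw [norm_mul, norm_mul, norm_neg, Complex.norm_natCast, Complex.norm_real, Real.norm_eq_abs]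
    have hw' : |z.im| / 2 ≤ |w.im| := le_of_lt hw
    grw [norm_inv_sub_ofReal_pow_le (k + 1) (him hw) y, ← hw']

end StieltjesTransform

section ResolventEquation

lemma IsOscillatorDensity.integrable {ε : ℝ} {L L₁ L₂ : ℝ → ℝ}
    (h : IsOscillatorDensity ε L L₁ L₂) : Integrable L := by
  simpa using h.integrable_pow_mul 0

/-- In terms of the Stieltjes transform `G`, this is `(2 - z²) ∂G + z G - 2 = O(ε²)`. -/
lemma IsOscillatorDensity.stieltjes_equation {ε : ℝ} {L L₁ L₂ : ℝ → ℝ}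
    (h : IsOscillatorDensity ε L L₁ L₂) {z : ℂ} (hz : z.im ≠ 0) :
    (2 - z ^ 2) * -stieltjes L 2 z + z * stieltjes L 1 z - 2 =
      3 / 2 * ε ^ 2 * stieltjes L 4 z := by
  have hint := h.integrable
  have hint₁ : Integrable fun y => y * L y := by simpa using h.integrable_pow_mul 1
  have hint₂ : Integrable fun y => y * (y * L y) :=
    (h.integrable_pow_mul 2).congr (.of_forall fun y => by ring)
  have hderiv (y : ℝ) :
      HasDerivAt (fun y => ε ^ 2 * L₂ y + (8 * L y + -4 * (y * (y * L y))))
        (-12 * (y * L y)) y := by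
    have hL := h.hasDerivAt y
    have hyyL := (hasDerivAt_id' y).fun_mul ((hasDerivAt_id' y).fun_mul hL)
    exact ((h.hasDerivAt₂ y).fun_add ((hL.const_mul 8).fun_add (hyyL.const_mul (-4)))).congr_deriv
      (by ring)
  have hpoly := (hint.const_mul 8).fun_add (hint₂.const_mul (-4))
  have hparts := stieltjes_deriv ((h.integrable₂.const_mul (ε ^ 2)).fun_add hpoly)
    (hint₁.const_mul (-12)) hderiv 1 hz
  have hL₂ : stieltjes L₂ 2 z = 6 * stieltjes L 4 z := by
    rw [stieltjes_deriv h.integrable₁ h.integrable₂ h.hasDerivAt₁ 2 hz,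
      stieltjes_deriv hint h.integrable₁ h.hasDerivAt 3 hz]
    push_cast; ring
  rw [stieltjes_add (h.integrable₂.const_mul _) hpoly 2 hz,
    stieltjes_add (hint.const_mul 8) (hint₂.const_mul (-4)) 2 hz] at hparts
  simp only [stieltjes_const_mul, stieltjes_id_mul hint₁ 1 hz, stieltjes_id_mul hint 1 hz,
    stieltjes_id_mul hint 0 hz, stieltjes_zero, h.integral_eq_one, hL₂] at hparts
  push_cast at hparts
  linear_combination (-1 / 4) * hparts

end ResolventEquation

section ComplexSqrt

lemma complexSqrt_sq (w : ℂ) : Complex.sqrt w ^ 2 = w := Complex.cpow_ofNat_inv_pow w 2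

lemma complexSqrt_re_nonneg (w : ℂ) : 0 ≤ (Complex.sqrt w).re := by
  rw [Complex.sqrt, Complex.cpow_inv_two_re]
  positivity

lemma sqrt_re_le_complexSqrt_re (w : ℂ) : √w.re ≤ (Complex.sqrt w).re := by
  rw [Complex.sqrt, Complex.cpow_inv_two_re]
  exact Real.sqrt_le_sqrt (by linarith [Complex.re_le_norm w])

lemma two_mul_complexSqrt_re_mul_im (w : ℂ) :
    2 * (Complex.sqrt w).re * (Complex.sqrt w).im = w.im := by
  conv_rhs => rw [← complexSqrt_sq w, pow_two, Complex.mul_im]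
  ring

end ComplexSqrt

section SemicircleLaw

/-- The branch of `√(2 - z²)` with nonnegative real part; `z - i √(2 - z²)` is the Stieltjes
transform of the semicircle law on `[-√2, √2]` for `z` in the upper half plane. -/
noncomputable def semicircleRoot (z : ℂ) : ℂ := Complex.sqrt (2 - z ^ 2)

lemma semicircleRoot_sq (z : ℂ) : semicircleRoot z ^ 2 = 2 - z ^ 2 := complexSqrt_sq _

lemma two_sub_sq_re (z : ℂ) : (2 - z ^ 2).re = 2 - z.re ^ 2 + z.im ^ 2 := by
  simp [pow_two]; ring

lemma sqrt_le_semicircleRoot_re (z : ℂ) :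
    √(2 - z.re ^ 2 + z.im ^ 2) ≤ (semicircleRoot z).re := by
  rw [← two_sub_sq_re]; exact sqrt_re_le_complexSqrt_re _

lemma semicircleRoot_ne_zero {z : ℂ} (hz : 0 < 2 - z.re ^ 2 + z.im ^ 2) : semicircleRoot z ≠ 0 := by
  intro h
  have hle := sqrt_le_semicircleRoot_re z
  rw [h, Complex.zero_re] at hle
  exact hle.not_gt (Real.sqrt_pos.2 hz)

lemma sqrt_le_semicircleRoot_re_of_abs_re_le {z : ℂ} {b : ℝ} (hre : |z.re| ≤ b) :
    √(2 - b ^ 2) ≤ (semicircleRoot z).re := by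
  refine le_trans (Real.sqrt_le_sqrt ?_) (sqrt_le_semicircleRoot_re z)
  linarith [sq_le_sq' (abs_le.1 hre).1 (abs_le.1 hre).2, sq_nonneg z.im]

lemma hasDerivAt_semicircleRoot {z : ℂ} (hz : 0 < 2 - z.re ^ 2 + z.im ^ 2) :
    HasDerivAt semicircleRoot (-z / semicircleRoot z) z := by
  have hslit : 2 - z ^ 2 ∈ Complex.slitPlane := .inl (by rwa [two_sub_sq_re])
  refine ((Complex.hasDerivAt_sqrt hslit).comp z
    ((hasDerivAt_pow 2 z).const_sub 2)).congr_deriv ?_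
  rw [semicircleRoot, Complex.sqrt, neg_div, Complex.cpow_neg, one_div]
  ring

lemma abs_semicircleRoot_im_le {z : ℂ} {b : ℝ} (hb : b ^ 2 < 2) (hre : |z.re| ≤ b)
    (him : 0 ≤ z.im) : |(semicircleRoot z).im| ≤ b * z.im / √(2 - b ^ 2) := by
  have hroot := sqrt_le_semicircleRoot_re_of_abs_re_le hre
  have hprod : (semicircleRoot z).re * (semicircleRoot z).im = -(z.re * z.im) := by
    have himw : (2 - z ^ 2).im = -(2 * (z.re * z.im)) := by simp [pow_two]; ring
    have := two_mul_complexSqrt_re_mul_im (2 - z ^ 2)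
    rw [← semicircleRoot, himw] at this
    linarith
  rw [le_div_iff₀ (Real.sqrt_pos.2 (by linarith)), mul_comm]
  calc _ ≤ (semicircleRoot z).re * |(semicircleRoot z).im| := by gcongr
    _ = |z.re| * z.im := by
      rw [← abs_of_nonneg ((Real.sqrt_nonneg _).trans hroot), ← abs_mul, hprod, abs_neg, abs_mul,
        abs_of_nonneg him]
    _ ≤ b * z.im := by gcongr

lemma norm_semicircleRoot_le (z : ℂ) : ‖semicircleRoot z‖ ≤ 2 + ‖z‖ := by
  refine abs_le_of_sq_le_sq' ?_ (by positivity) |>.2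
  calc ‖semicircleRoot z‖ ^ 2 = ‖2 - z ^ 2‖ := by rw [← norm_pow, semicircleRoot_sq]
    _ ≤ 2 + ‖z‖ ^ 2 := (norm_sub_le _ _).trans_eq (by simp)
    _ ≤ (2 + ‖z‖) ^ 2 := by nlinarith [norm_nonneg z]

/-- The product of `√(2 - z²) + i z` and `√(2 - z²) - i z` is `2`. -/
lemma norm_semicircleRoot_add_I_mul_le {z : ℂ} (hz : 0 < z.im) :
    ‖semicircleRoot z + Complex.I * z‖ ≤ 2 / z.im := by
  have hre : z.im ≤ ‖semicircleRoot z - Complex.I * z‖ := by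
    refine le_trans ?_ (Complex.re_le_norm _)
    simpa [semicircleRoot] using complexSqrt_re_nonneg (2 - z ^ 2)
  have hprod : (semicircleRoot z + Complex.I * z) * (semicircleRoot z - Complex.I * z) = 2 := by
    linear_combination semicircleRoot_sq z - z ^ 2 * Complex.I_sq
  rw [le_div_iff₀ hz]
  calc _ ≤ ‖semicircleRoot z + Complex.I * z‖ * ‖semicircleRoot z - Complex.I * z‖ := by gcongr
    _ = 2 := by rw [← norm_mul, hprod, Complex.norm_ofNat]

variable {ε : ℝ} {L L₁ L₂ : ℝ → ℝ} {z : ℂ}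

namespace IsOscillatorDensity

lemma norm_stieltjes_le (h : IsOscillatorDensity ε L L₁ L₂) (k : ℕ) (hz : 0 < z.im) :
    ‖stieltjes L k z‖ ≤ 1 / z.im ^ k := by
  have hbound := _root_.norm_stieltjes_le h.integrable k hz.ne'
  simp_rw [abs_of_nonneg (h.nonneg _), h.integral_eq_one, abs_of_pos hz] at hbound
  exact hbound

lemma norm_stieltjes_sub_le (h : IsOscillatorDensity ε L L₁ L₂) (hz : 0 < z.im) :
    ‖stieltjes L 1 z - (z - Complex.I * semicircleRoot z)‖ ≤ 3 / z.im := by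
  have hdecomp : stieltjes L 1 z - (z - Complex.I * semicircleRoot z) =
      stieltjes L 1 z + Complex.I * (semicircleRoot z + Complex.I * z) := by
    linear_combination -z * Complex.I_sq
  calc _ ≤ ‖stieltjes L 1 z‖ + ‖Complex.I * (semicircleRoot z + Complex.I * z)‖ := by
        rw [hdecomp]; exact norm_add_le _ _
    _ ≤ 1 / z.im ^ 1 + 2 / z.im := by
        rw [norm_mul, Complex.norm_I, one_mul]
        exact add_le_add (h.norm_stieltjes_le 1 hz) (norm_semicircleRoot_add_I_mul_le hz)
    _ = 3 / z.im := by ring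

/-- Variation of constants: `√(2 - z²)` solves the homogeneous part of the resolvent equation, and
`z` is a particular solution for `ε = 0`. -/
lemma hasDerivAt_stieltjes_sub_div (h : IsOscillatorDensity ε L L₁ L₂) (hz : z.im ≠ 0)
    (hre : 0 < 2 - z.re ^ 2 + z.im ^ 2) :
    HasDerivAt (fun z => (stieltjes L 1 z - z) / semicircleRoot z)
      (3 / 2 * ε ^ 2 * stieltjes L 4 z / semicircleRoot z ^ 3) z := by
  have hs := semicircleRoot_ne_zero hre
  refine (((hasDerivAt_stieltjes h.integrable 1 hz).sub (hasDerivAt_id' z)).div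
    (hasDerivAt_semicircleRoot hre) hs).congr_deriv ?_
  rw [← h.stieltjes_equation hz, ← semicircleRoot_sq]
  field_simp
  simp only [Pi.sub_apply, Nat.cast_one]
  linear_combination -semicircleRoot_sq z

lemma norm_stieltjes_sub_div_sub_le (h : IsOscillatorDensity ε L L₁ L₂) {b η : ℝ} (hb : b ^ 2 < 2)
    (hη : 0 < η) {w : ℂ} (hz : |z.re| ≤ b) (hz' : η ≤ z.im) (hw : |w.re| ≤ b) (hw' : η ≤ w.im) :
    ‖(stieltjes L 1 z - z) / semicircleRoot z - (stieltjes L 1 w - w) / semicircleRoot w‖ ≤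
      3 / 2 * ε ^ 2 / (η ^ 4 * √(2 - b ^ 2) ^ 3) * ‖z - w‖ := by
  have hc : 0 < √(2 - b ^ 2) := Real.sqrt_pos.2 (by linarith)
  have hconv : Convex ℝ ({u : ℂ | -b ≤ u.re} ∩ {u | u.re ≤ b} ∩ {u | η ≤ u.im}) :=
    ((convex_halfSpace_re_ge _).inter (convex_halfSpace_re_le _)).inter (convex_halfSpace_im_ge _)
  refine hconv.norm_image_sub_le_of_norm_hasDerivWithin_le
    (f := fun z => (stieltjes L 1 z - z) / semicircleRoot z)
    (f' := fun z => 3 / 2 * ε ^ 2 * stieltjes L 4 z / semicircleRoot z ^ 3)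
    (fun u hu => ?_) (fun u hu => ?_) ⟨abs_le.1 hw, hw'⟩ ⟨abs_le.1 hz, hz'⟩
  · have hre : u.re ^ 2 ≤ b ^ 2 := sq_le_sq' hu.1.1 hu.1.2
    exact (h.hasDerivAt_stieltjes_sub_div (hη.trans_le hu.2).ne'
      (by linarith [sq_nonneg u.im])).hasDerivWithinAt
  · have him : 0 < u.im := hη.trans_le hu.2
    have hroot := (sqrt_le_semicircleRoot_re_of_abs_re_le (abs_le.2 hu.1)).trans
      (Complex.re_le_norm _)
    have hm : ‖stieltjes L 4 u‖ ≤ 1 / η ^ 4 :=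
      (h.norm_stieltjes_le 4 him).trans (one_div_le_one_div_of_le (by positivity)
        (pow_le_pow_left₀ hη.le hu.2 4))
    calc _ = 3 / 2 * ε ^ 2 * ‖stieltjes L 4 u‖ / ‖semicircleRoot u‖ ^ 3 := by
          simp
      _ ≤ 3 / 2 * ε ^ 2 * (1 / η ^ 4) / √(2 - b ^ 2) ^ 3 := by gcongr
      _ = _ := by field_simp

lemma norm_stieltjes_sub_div_add_I (hz : 0 < 2 - z.re ^ 2 + z.im ^ 2) :
    ‖(stieltjes L 1 z - z) / semicircleRoot z + Complex.I‖ =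
      ‖stieltjes L 1 z - (z - Complex.I * semicircleRoot z)‖ / ‖semicircleRoot z‖ := by
  have hs := semicircleRoot_ne_zero hz
  rw [← norm_div]
  congr 1
  field_simp
  ring

/-- Integrates the equation along the segment from `i / Im z`, where `G` is close to
`z - i √(2 - z²)` because both are small, down to `z`. -/
lemma norm_stieltjes_sub_le_of_abs_re_le (h : IsOscillatorDensity ε L L₁ L₂) {b : ℝ}
    (hb : b ^ 2 < 2) (hre : |z.re| ≤ b) (him : 0 < z.im) (him₁ : z.im ≤ 1) :
    ‖stieltjes L 1 z - (z - Complex.I * semicircleRoot z)‖ ≤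
      (3 * z.im ^ 2 + 3 / 2 * ε ^ 2 / (z.im ^ 4 * √(2 - b ^ 2) ^ 3) * (b + 1 / z.im)) *
        ‖semicircleRoot z‖ := by
  have hz : 0 < 2 - z.re ^ 2 + z.im ^ 2 := by
    linarith [sq_le_sq' (abs_le.1 hre).1 (abs_le.1 hre).2, sq_nonneg z.im]
  set η := z.im
  have hη : η ≤ 1 / η := him₁.trans ((one_le_div him).2 him₁)
  set w : ℂ := ⟨0, 1 / η⟩
  have hw : 1 / η ≤ ‖semicircleRoot w‖ := by
    refine le_trans ?_ ((sqrt_le_semicircleRoot_re w).trans (Complex.re_le_norm _))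
    exact Real.le_sqrt_of_sq_le (by simp [w])
  have hstart : ‖(stieltjes L 1 w - w) / semicircleRoot w + Complex.I‖ ≤ 3 * η ^ 2 := by
    rw [norm_stieltjes_sub_div_add_I (by simp only [w]; positivity)]
    calc _ ≤ 3 / (1 / η) / (1 / η) :=
          div_le_div₀ (by positivity) (h.norm_stieltjes_sub_le (by positivity)) (by positivity) hw
      _ = 3 * η ^ 2 := by field_simp
  have hdist : ‖z - w‖ ≤ b + 1 / η := by
    refine (Complex.norm_le_abs_re_add_abs_im _).trans (add_le_add (by simpa [w] using hre) ?_)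
    rw [Complex.sub_im, abs_sub_comm, abs_of_nonneg (sub_nonneg.2 hη)]
    linarith
  have hstep := h.norm_stieltjes_sub_div_sub_le hb him hre le_rfl
    (w := w) (by simpa [w] using (abs_nonneg _).trans hre) hη
  have htri := norm_add_le
    ((stieltjes L 1 z - z) / semicircleRoot z - (stieltjes L 1 w - w) / semicircleRoot w)
    ((stieltjes L 1 w - w) / semicircleRoot w + Complex.I)
  rw [← add_assoc, sub_add_cancel, norm_stieltjes_sub_div_add_I hz] at htri
  rw [← div_le_iff₀ (norm_pos_iff.2 (semicircleRoot_ne_zero hz))]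
  calc _ ≤ _ := htri
    _ ≤ 3 / 2 * ε ^ 2 / (η ^ 4 * √(2 - b ^ 2) ^ 3) * (b + 1 / η) + 3 * η ^ 2 := by
      refine add_le_add (hstep.trans ?_) hstart
      gcongr
    _ = _ := add_comm _ _

lemma abs_stieltjes_re_sub_le (h : IsOscillatorDensity ε L L₁ L₂) {b : ℝ} (hb : b ^ 2 < 2)
    (hre : |z.re| ≤ b) (him : 0 < z.im) (him₁ : z.im ≤ 1) (hε : |ε| ≤ z.im ^ 3) :
    |(stieltjes L 1 z).re - z.re| ≤
      (15 + 15 / 2 * (b + 1) / √(2 - b ^ 2) ^ 3 + b / √(2 - b ^ 2)) * z.im := by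
  have hb₀ : 0 ≤ b := (abs_nonneg _).trans hre
  have hc : 0 < √(2 - b ^ 2) := Real.sqrt_pos.2 (by linarith)
  have hε₂ : ε ^ 2 ≤ z.im ^ 6 := by
    calc ε ^ 2 = |ε| ^ 2 := (sq_abs ε).symm
      _ ≤ (z.im ^ 3) ^ 2 := by gcongr
      _ = z.im ^ 6 := by ring
  have herror : 3 * z.im ^ 2 + 3 / 2 * ε ^ 2 / (z.im ^ 4 * √(2 - b ^ 2) ^ 3) * (b + 1 / z.im) ≤
      (3 + 3 / 2 * (b + 1) / √(2 - b ^ 2) ^ 3) * z.im := by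
    calc _ ≤ 3 * z.im ^ 2 +
          3 / 2 * z.im ^ 6 / (z.im ^ 4 * √(2 - b ^ 2) ^ 3) * (b + 1 / z.im) := by gcongr
      _ = (3 * z.im + 3 / 2 * (b * z.im + 1) / √(2 - b ^ 2) ^ 3) * z.im := by field_simp
      _ ≤ (3 * 1 + 3 / 2 * (b * 1 + 1) / √(2 - b ^ 2) ^ 3) * z.im := by gcongr
      _ = _ := by ring
  have hroot : ‖semicircleRoot z‖ ≤ 5 := by
    have hb₁ : b ≤ 2 := abs_le_of_sq_le_sq' (by linarith) two_pos.le |>.2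
    linarith [norm_semicircleRoot_le z, Complex.norm_le_abs_re_add_abs_im z, abs_of_pos him]
  have hdecomp : (stieltjes L 1 z).re - z.re =
      (stieltjes L 1 z - (z - Complex.I * semicircleRoot z)).re + (semicircleRoot z).im := by
    simp [← sub_sub]
  rw [hdecomp]
  calc _ ≤ |(stieltjes L 1 z - (z - Complex.I * semicircleRoot z)).re| + |(semicircleRoot z).im| :=
        abs_add_le _ _
    _ ≤ (3 + 3 / 2 * (b + 1) / √(2 - b ^ 2) ^ 3) * z.im * 5 + b * z.im / √(2 - b ^ 2) := by
      refine add_le_add ((Complex.abs_re_le_norm _).trans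
        ((h.norm_stieltjes_sub_le_of_abs_re_le hb hre him him₁).trans ?_))
        (abs_semicircleRoot_im_le hb hre him.le)
      gcongr
    _ = _ := by ring

end IsOscillatorDensity

end SemicircleLaw

section TruncatedHilbertTransform

/-- The truncated Hilbert transform `∫_{ρ ≤ |t - y|} f(y) / (t - y) dy`. -/
noncomputable def truncatedHilbert (ρ : ℝ) (f : ℝ → ℝ) (t : ℝ) : ℝ :=
  ∫ y in {y | ρ ≤ |t - y|}, f y / (t - y)

/-- The difference between the kernel `Re (u + i η)⁻¹` of the real part of the Stieltjes transform
at height `η` and the kernel `1_{ρ ≤ |u|} u⁻¹` of the truncated Hilbert transform. -/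
noncomputable def truncationKernel (η ρ u : ℝ) : ℝ :=
  u / (u ^ 2 + η ^ 2) - {u | ρ ≤ |u|}.indicator (fun u => u⁻¹) u

variable {η ρ δ t : ℝ} {f : ℝ → ℝ}

lemma truncationKernel_of_le {u : ℝ} (hu : ρ ≤ |u|) :
    truncationKernel η ρ u = u / (u ^ 2 + η ^ 2) - u⁻¹ := by
  rw [truncationKernel, indicator_of_mem (by exact hu)]

lemma truncationKernel_of_lt {u : ℝ} (hu : |u| < ρ) :
    truncationKernel η ρ u = u / (u ^ 2 + η ^ 2) := by
  rw [truncationKernel, indicator_of_notMem (by exact hu.not_ge), sub_zero]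

lemma measurable_truncationKernel : Measurable (truncationKernel η ρ) :=
  (show Measurable fun u : ℝ => u / (u ^ 2 + η ^ 2) by fun_prop).sub
    (measurable_inv.indicator (measurableSet_le measurable_const measurable_norm))

lemma truncationKernel_odd : Function.Odd (truncationKernel η ρ) := by
  intro u
  rcases le_or_gt ρ |u| with hu | hu
  · rw [truncationKernel_of_le hu, truncationKernel_of_le (by rwa [abs_neg]), neg_sq, inv_neg]
    ring
  · rw [truncationKernel_of_lt hu, truncationKernel_of_lt (by rwa [abs_neg]), neg_sq, neg_div]

lemma abs_mul_abs_truncationKernel_le_one (hρ : 0 < ρ) (u : ℝ) :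
    |u| * |truncationKernel η ρ u| ≤ 1 := by
  have hfrac₀ : 0 ≤ u ^ 2 / (u ^ 2 + η ^ 2) := by positivity
  have hfrac₁ : u ^ 2 / (u ^ 2 + η ^ 2) ≤ 1 :=
    div_le_one_of_le₀ (by linarith [sq_nonneg η]) (by positivity)
  rw [← abs_mul, abs_le]
  rcases le_or_gt ρ |u| with hu | hu
  · rw [truncationKernel_of_le hu, mul_sub, mul_inv_cancel₀ (abs_pos.1 (hρ.trans_le hu)),
      ← mul_div_assoc, ← pow_two]
    constructor <;> linarith
  · rw [truncationKernel_of_lt hu, ← mul_div_assoc, ← pow_two]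
    constructor <;> linarith

lemma abs_truncationKernel_le_div (hδ : 0 < δ) (hρ : ρ ≤ δ) {u : ℝ} (hu : δ ≤ |u|) :
    |truncationKernel η ρ u| ≤ η ^ 2 / δ ^ 3 := by
  have hu₀ : u ≠ 0 := abs_pos.1 (hδ.trans_le hu)
  have hkernel : u / (u ^ 2 + η ^ 2) - u⁻¹ = -(η ^ 2 / (u * (u ^ 2 + η ^ 2))) := by
    have : u ^ 2 + η ^ 2 ≠ 0 := by positivity
    field_simp
    ring
  rw [truncationKernel_of_le (hρ.trans hu), hkernel, abs_neg, abs_div, abs_mul,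
    abs_of_nonneg (sq_nonneg η), abs_of_nonneg (by positivity : 0 ≤ u ^ 2 + η ^ 2)]
  refine div_le_div_of_nonneg_left (by positivity) (by positivity) ?_
  calc δ ^ 3 ≤ |u| ^ 3 := by gcongr
    _ = |u| * u ^ 2 := by rw [← sq_abs u]; ring
    _ ≤ |u| * (u ^ 2 + η ^ 2) := by gcongr; linarith [sq_nonneg η]

lemma abs_truncationKernel_le (hη : 0 < η) (hρ : 0 < ρ) (u : ℝ) :
    |truncationKernel η ρ u| ≤ 1 / ρ + ρ / η ^ 2 := by
  rcases le_or_gt ρ |u| with hu | hu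
  · calc _ ≤ 1 / |u| := by
          rw [le_div_iff₀' (hρ.trans_le hu)]; exact abs_mul_abs_truncationKernel_le_one hρ u
      _ ≤ 1 / ρ + ρ / η ^ 2 :=
        (one_div_le_one_div_of_le hρ hu).trans (le_add_of_nonneg_right (by positivity))
  · rw [truncationKernel_of_lt hu, abs_div, abs_of_pos (by positivity : 0 < u ^ 2 + η ^ 2)]
    calc _ ≤ ρ / η ^ 2 := by gcongr; linarith [sq_nonneg u]
      _ ≤ _ := le_add_of_nonneg_left (by positivity)

lemma integrable_mul_truncationKernel (hf : Integrable f) (hη : 0 < η) (hρ : 0 < ρ) (t : ℝ) :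
    Integrable fun y => f y * truncationKernel η ρ (t - y) :=
  hf.mul_bdd (measurable_truncationKernel.comp (by fun_prop)).aestronglyMeasurable
    (.of_forall fun _ => abs_truncationKernel_le hη hρ _)

lemma stieltjes_re_sub_truncatedHilbert (hf : Integrable f) (hη : 0 < η) (hρ : 0 < ρ) (t : ℝ) :
    (stieltjes f 1 ⟨t, η⟩).re - truncatedHilbert ρ f t =
      ∫ y, f y * truncationKernel η ρ (t - y) := by
  have hint := integrable_stieltjes (z := ⟨t, η⟩) hf 1 hη.ne'
  have hre (y : ℝ) : ((f y : ℂ) * (((⟨t, η⟩ : ℂ) - y)⁻¹) ^ 1).re =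
      f y * ((t - y) / ((t - y) ^ 2 + η ^ 2)) := by
    simp [Complex.inv_re, Complex.normSq_apply, pow_two]
  have hintre : Integrable fun y => f y * ((t - y) / ((t - y) ^ 2 + η ^ 2)) :=
    hint.re.congr (.of_forall hre)
  have hstieltjes : (stieltjes f 1 ⟨t, η⟩).re = ∫ y, f y * ((t - y) / ((t - y) ^ 2 + η ^ 2)) := by
    rw [← integral_congr_ae (.of_forall hre)]
    exact (integral_re hint).symm
  rw [hstieltjes, sub_eq_iff_eq_add', ← sub_eq_iff_eq_add,
    ← integral_sub hintre (integrable_mul_truncationKernel hf hη hρ t), truncatedHilbert,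
    ← integral_indicator (measurableSet_le measurable_const (by fun_prop))]
  refine integral_congr_ae (.of_forall fun y => ?_)
  rcases le_or_gt ρ |t - y| with hy | hy
  · simp only [truncationKernel_of_le hy, indicator_of_mem (show y ∈ {y | ρ ≤ |t - y|} from hy)]
    ring
  · simp only [truncationKernel_of_lt hy,
      indicator_of_notMem (show y ∉ {y | ρ ≤ |t - y|} from hy.not_ge), sub_self]

lemma integral_eq_zero_of_odd {g : ℝ → ℝ} (hg : g.Odd) : ∫ u, g u = 0 := by
  have hneg := integral_neg_eq_self g volume
  simp_rw [hg.eq, integral_neg] at hneg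
  linarith

lemma integral_indicator_ball_mul_truncationKernel (c t : ℝ) :
    ∫ y, (Metric.ball t δ).indicator (fun _ => c) y * truncationKernel η ρ (t - y) = 0 := by
  have hshift (y : ℝ) : (Metric.ball t δ).indicator (fun _ => c) y =
      (Metric.ball 0 δ).indicator (fun _ => c) (t - y) := by
    simp only [indicator, Metric.mem_ball, Real.dist_eq, sub_zero, abs_sub_comm]
  simp_rw [hshift]
  rw [integral_sub_left_eq_self
    (fun u => (Metric.ball 0 δ).indicator (fun _ => c) u * truncationKernel η ρ u)]
  refine integral_eq_zero_of_odd fun u => ?_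
  simp only [indicator, Metric.mem_ball, dist_zero_right, norm_neg, truncationKernel_odd.eq,
    mul_neg]

/-- Near `t`, oddness of the kernel allows subtracting the constant `f t` from `f`. -/
lemma abs_stieltjes_re_sub_truncatedHilbert_le {Λ : ℝ} (hf : Integrable f) (hf₀ : ∀ y, 0 ≤ f y)
    (hη : 0 < η) (hρ : 0 < ρ) (hρδ : ρ ≤ δ) (hΛ : 0 ≤ Λ)
    (hlip : ∀ y ∈ Metric.ball t δ, |f y - f t| ≤ Λ * |y - t|) :
    |(stieltjes f 1 ⟨t, η⟩).re - truncatedHilbert ρ f t| ≤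
      2 * Λ * δ + η ^ 2 / δ ^ 3 * ∫ y, f y := by
  have hδ : 0 < δ := hρ.trans_le hρδ
  have hind (c : ℝ) : Integrable ((Metric.ball t δ).indicator fun _ => c) :=
    (integrable_indicator_iff measurableSet_ball).2 (integrableOn_const measure_ball_lt_top.ne)
  have hbound (y : ℝ) :
      ‖(f y - (Metric.ball t δ).indicator (fun _ => f t) y) * truncationKernel η ρ (t - y)‖ ≤
        (Metric.ball t δ).indicator (fun _ => Λ) y + η ^ 2 / δ ^ 3 * f y := by
    rw [norm_mul, Real.norm_eq_abs, Real.norm_eq_abs]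
    by_cases hy : y ∈ Metric.ball t δ
    · rw [indicator_of_mem hy, indicator_of_mem hy]
      calc _ ≤ Λ * (|t - y| * |truncationKernel η ρ (t - y)|) := by
            rw [abs_sub_comm t, ← mul_assoc]; gcongr; exact hlip y hy
        _ ≤ Λ * 1 := by gcongr; exact abs_mul_abs_truncationKernel_le_one hρ _
        _ ≤ _ := by rw [mul_one]; exact le_add_of_nonneg_right (mul_nonneg (by positivity) (hf₀ y))
    · rw [indicator_of_notMem hy, indicator_of_notMem hy, sub_zero, zero_add, mul_comm,
        abs_of_nonneg (hf₀ y)]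
      refine mul_le_mul_of_nonneg_right (abs_truncationKernel_le_div hδ hρδ ?_) (hf₀ y)
      rwa [Metric.mem_ball', Real.dist_eq, not_lt] at hy
  calc |(stieltjes f 1 ⟨t, η⟩).re - truncatedHilbert ρ f t|
      = ‖∫ y, (f y - (Metric.ball t δ).indicator (fun _ => f t) y) *
          truncationKernel η ρ (t - y)‖ := by
        simp_rw [sub_mul]
        rw [integral_sub (integrable_mul_truncationKernel hf hη hρ t)
          (integrable_mul_truncationKernel (hind _) hη hρ t),
          integral_indicator_ball_mul_truncationKernel, sub_zero,
          stieltjes_re_sub_truncatedHilbert hf hη hρ, Real.norm_eq_abs]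
    _ ≤ ∫ y, (Metric.ball t δ).indicator (fun _ => Λ) y + η ^ 2 / δ ^ 3 * f y :=
        norm_integral_le_of_norm_le ((hind _).add (hf.const_mul _)) (.of_forall hbound)
    _ = 2 * Λ * δ + η ^ 2 / δ ^ 3 * ∫ y, f y := by
        rw [integral_add (hind _) (hf.const_mul _), integral_const_mul,
          integral_indicator measurableSet_ball, setIntegral_const,
          Real.volume_real_ball hδ.le, smul_eq_mul]
        ring

end TruncatedHilbertTransform

section DriftCancellation

lemma IsOscillatorDensity.abs_truncatedHilbert_sub_le {ε : ℝ} {L L₁ L₂ : ℝ → ℝ}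
    (h : IsOscillatorDensity ε L L₁ L₂) (hlog : ∀ y, (√2 - |y|) * |L₁ y| ≤ L y) {b s ρ t : ℝ}
    (hb : b < √2) (ht : |t| ≤ b) (hs : 0 < s) (hs₁ : s ≤ 1) (hε : |ε| ≤ s ^ 6) (hρ : 0 < ρ)
    (hδ : s + ρ ≤ (√2 - b) / 2) :
    |truncatedHilbert ρ L t - t| ≤
      (16 + 15 / 2 * (b + 1) / √(2 - b ^ 2) ^ 3 + b / √(2 - b ^ 2) + 16 / (√2 - b) ^ 2) *
        (s + ρ) := by
  have hb₀ : 0 ≤ b := (abs_nonneg t).trans ht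
  have hb₂ : b ^ 2 < 2 := (Real.lt_sqrt hb₀).1 hb
  have hgap : 0 < √2 - b := sub_pos.2 hb
  have hstieltjes : |(stieltjes L 1 ⟨t, s ^ 2⟩).re - t| ≤
      (15 + 15 / 2 * (b + 1) / √(2 - b ^ 2) ^ 3 + b / √(2 - b ^ 2)) * s ^ 2 :=
    h.abs_stieltjes_re_sub_le (z := ⟨t, s ^ 2⟩) hb₂ ht (by positivity) (pow_le_one₀ hs.le hs₁)
      (hε.trans_eq (by ring))
  have hlip (y : ℝ) (hy : y ∈ Metric.ball t (s + ρ)) :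
      |L y - L t| ≤ 8 / (√2 - b) ^ 2 * |y - t| := by
    rw [Metric.mem_ball, Real.dist_eq] at hy
    have hy' : |y| ≤ √2 - (√2 - b) / 2 := by
      linarith [abs_sub_abs_le_abs_sub y t]
    have := abs_sub_le_of_sub_abs_mul_abs_deriv_le (half_pos hgap) h.integrable h.nonneg
      h.hasDerivAt hlog hy' (by linarith : |t| ≤ √2 - (√2 - b) / 2)
    rw [h.integral_eq_one] at this
    exact this.trans_eq (by field_simp; ring)
  have htrunc := abs_stieltjes_re_sub_truncatedHilbert_le h.integrable h.nonneg (sq_pos_of_pos hs)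
    hρ (le_add_of_nonneg_left hs.le) (by positivity) hlip
  rw [h.integral_eq_one, mul_one, abs_sub_comm] at htrunc
  have hfar : (s ^ 2) ^ 2 / (s + ρ) ^ 3 ≤ s + ρ := by
    rw [div_le_iff₀ (by positivity)]
    calc (s ^ 2) ^ 2 = s ^ 4 := by ring
      _ ≤ (s + ρ) ^ 4 := by gcongr; linarith
      _ = _ := by ring
  have hsq : s ^ 2 ≤ s + ρ := by nlinarith
  calc _ ≤ _ := abs_sub_le _ (stieltjes L 1 ⟨t, s ^ 2⟩).re _
    _ ≤ 2 * (8 / (√2 - b) ^ 2) * (s + ρ) + (s + ρ) +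
        (15 + 15 / 2 * (b + 1) / √(2 - b ^ 2) ^ 3 + b / √(2 - b ^ 2)) * (s + ρ) := by
      refine add_le_add (htrunc.trans (by gcongr)) (hstieltjes.trans (by gcongr))
    _ = _ := by ring

lemma tendstoUniformlyOn_truncatedHilbert_kerL {b : ℝ} (hb : b < √2) {ρ : ℕ → ℝ}
    (hρ₀ : ∀ᶠ N in atTop, 0 < ρ N) (hρ : Tendsto ρ atTop (nhds 0)) :
    TendstoUniformlyOn (fun N => truncatedHilbert (ρ N) fun y => kerL N y y) id atTop
      {t | |t| ≤ b} := by
  set s : ℕ → ℝ := fun N => (N : ℝ) ^ (-(1 / 6) : ℝ)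
  set C := 16 + 15 / 2 * (b + 1) / √(2 - b ^ 2) ^ 3 + b / √(2 - b ^ 2) + 16 / (√2 - b) ^ 2
  have hs : Tendsto (fun N => s N + ρ N) atTop (nhds 0) := by
    have hs₀ : Tendsto s atTop (nhds 0) :=
      (tendsto_rpow_neg_atTop (by norm_num : (0 : ℝ) < 1 / 6)).comp tendsto_natCast_atTop_atTop
    simpa using hs₀.add hρ
  have hC : Tendsto (fun N => C * (s N + ρ N)) atTop (nhds 0) := by simpa using hs.const_mul C
  rw [Metric.tendstoUniformlyOn_iff]
  intro ε hε
  filter_upwards [hρ₀, eventually_ge_atTop 1, hC.eventually_lt_const hε,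
    hs.eventually_le_const (half_pos (sub_pos.2 hb))] with N hρN hN hCN hδN t ht
  obtain ⟨n, rfl⟩ := Nat.exists_eq_add_of_le' hN
  rw [dist_comm, Real.dist_eq]
  refine lt_of_le_of_lt ((isOscillatorDensity_kerL n).abs_truncatedHilbert_sub_le
    (sub_abs_mul_abs_kerLDiagDeriv_le n) hb ht ?_ ?_ ?_ hρN hδN) hCN
  · positivity
  · exact Real.rpow_le_one_of_one_le_of_nonpos (by exact_mod_cast hN) (by norm_num)
  · refine le_of_eq ?_
    rw [abs_of_nonneg (by positivity), ← Real.rpow_natCast, ← Real.rpow_mul (by positivity)]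
    norm_num [Real.rpow_neg_one]

end DriftCancellation

theorem drift_cancellation_general {θ : ℝ} (hθ : |θ| < √2) (R : ℝ) {r : ℝ} (hr : 0 < r) :
    TendstoUniformlyOn
      (fun (N : ℕ) x => ∫ y in {y : ℝ | r / N ≤ |x / N + θ - y|}, kerL N y y / (x / N + θ - y))
      (fun _ => θ) atTop {x | |x| < R} := by
  obtain ⟨b, hθb, hb⟩ := exists_between hθ
  have hcutoff : ∀ᶠ N : ℕ in atTop, 0 < r / N := by
    filter_upwards [eventually_gt_atTop 0] with N hN
    positivity
  have htrunc := tendstoUniformlyOn_truncatedHilbert_kerL hb hcutoff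
    (tendsto_const_div_atTop_nhds_zero_nat r)
  rw [Metric.tendstoUniformlyOn_iff] at htrunc ⊢
  intro ε hε
  have hshift := (tendsto_const_div_atTop_nhds_zero_nat R).eventually_lt_const
    (lt_min (sub_pos.2 hθb) (half_pos hε))
  filter_upwards [htrunc (ε / 2) (half_pos hε), hshift] with N hN hRN x hx
  have hxN : |x / N| < min (b - |θ|) (ε / 2) := by
    refine lt_of_le_of_lt ?_ hRN
    rw [abs_div, Nat.abs_cast]
    exact div_le_div_of_nonneg_right (le_of_lt hx) N.cast_nonneg
  obtain ⟨hxb, hxε⟩ := lt_min_iff.1 hxN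
  have ht : |x / N + θ| ≤ b := by linarith [abs_add_le (x / N) θ]
  calc _ ≤ dist θ (x / N + θ) + dist (x / N + θ) _ := dist_triangle _ _ _
    _ < ε / 2 + ε / 2 := by
      refine add_lt_add ?_ (hN _ ht)
      rwa [dist_comm, Real.dist_eq, add_sub_cancel_right]
    _ = ε := add_halves ε

/-- Drift cancellation estimate (Lemma 4.4):
`lim_{r→∞} limsup_{N→∞} sup_{|x|<R} | ∫_{T^N_{r,∞}(x)} L^N(y,y)/(x_θ^N - y) dy - θ | = 0`. -/
theorem drift_cancellation (θ : ℝ) (hθ1 : -Real.sqrt 2 < θ) (hθ2 : θ < Real.sqrt 2)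
    (R : ℕ) (hR : 1 ≤ R) :
    ∀ ε : ℝ, 0 < ε → ∃ r0 : ℝ, ∀ r : ℝ, r0 ≤ r → ∃ N0 : ℕ, ∀ N : ℕ, N0 ≤ N →
      ∀ x : ℝ, |x| < (R : ℝ) →
      |(∫ y in {y : ℝ | r / (N : ℝ) ≤ |x / (N : ℝ) + θ - y|},
          kerL N y y / (x / (N : ℝ) + θ - y)) - θ| < ε := by
  refine fun ε hε => ⟨1, fun r hr => eventually_atTop.1 ?_⟩
  simpa only [dist_comm θ, Real.dist_eq, mem_ofPred_eq] using Metric.tendstoUniformlyOn_iff.1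
    (drift_cancellation_general (abs_lt.2 ⟨hθ1, hθ2⟩) R (one_pos.trans_le hr)) ε hε
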